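/- Model blocks as the inductive type in which a block B consists of an author author(B) ∈ V, a round round(B) ∈ ℕ, and a finite ordered list parents(B) of blocks. Define SupportedBlock(B, A, r) recursively: if r ≥ round(B), return none; otherwise iterate over parents(B) in order and, for each parent b′, if (author(b′), round(b′)) = (A, r) return some b′, else if SupportedBlock(b′, A, r) = some res return some res; if the iteration completes without returning, return none. Let B₀, B₁, …, B_k be a sequence of blocks with strictly increasing rounds (round(B_i) < round(B_{i+1}) for all i < k) such that for each i < k the first element of parents(B_{i+1}) is B_i. Then: (a) if SupportedBlock(B_i, A, r) = some b for some index i, then SupportedBlock(B_j, A, r) = some b for every j with i ≤ j ≤ k; and consequently (b) there do not exist indices i, j and distinct blocks b ≠ b′ with SupportedBlock(B_i, A, r) = some b and SupportedBlock(B_j, A, r) = some b′. -/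

import Mathlib

/-- A block consists of an author, a round number, and an ordered list of
parent blocks. -/
inductive Block (V : Type) : Type where
  | mk (author : V) (round : ℕ) (parents : List (Block V)) : Block V

def Block.author {V : Type} : Block V → V
  | .mk a _ _ => a

def Block.round {V : Type} : Block V → ℕ
  | .mk _ r _ => r

def Block.parents {V : Type} : Block V → List (Block V)
  | .mk _ _ ps => ps

mutual
/-- `supportedBlock A r B`: the block of author `A` and round `r` supported by
`B`, i.e. the first block with author `A` and round `r` encountered in the
depth-first search from `B` following the ordered parent references
(Algorithm 1, `SupportedBlock`). -/
def supportedBlock {V : Type} [DecidableEq V] (A : V) (r : ℕ) :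
    Block V → Option (Block V)
  | .mk _ rd ps => if r ≥ rd then none else supportedList A r ps

def supportedList {V : Type} [DecidableEq V] (A : V) (r : ℕ) :
    List (Block V) → Option (Block V)
  | [] => none
  | p :: ps =>
    if p.author = A ∧ p.round = r then some p
    else
      match supportedBlock A r p with
      | some res => some res
      | none => supportedList A r ps
end

theorem supportedBlock_step {V : Type} [DecidableEq V] (A : V) (r : ℕ) (P Q b : Block V)
    (hr : P.round < Q.round) (hp : Q.parents.head? = some P)
    (h : supportedBlock A r P = some b) : supportedBlock A r Q = some b := by
  have hlt : r < P.round := by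
    cases P with
    | mk a rd ps =>
      by_contra hc
      simp only [Block.round] at hc
      rw [supportedBlock, if_pos (by omega)] at h
      cases h
  cases Q with
  | mk a rd ps =>
    cases ps with
    | nil => simp [Block.parents] at hp
    | cons p ps =>
      simp only [Block.parents, List.head?_cons, Option.some.injEq] at hp
      subst hp
      have hr' : p.round < rd := hr
      rw [supportedBlock, if_neg (by omega), supportedList, if_neg (by omega), h]

/-- Lemma `unique-support`: along a chain of blocks `B 0, B 1, …, B k` with
strictly increasing rounds in which each block's first parent is the previous
block of the chain (a correct validator's sequence of blocks), (a) once some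
block `b` is supported for the slot `(A, r)` it remains supported by all later
blocks of the chain, and consequently (b) the chain never supports two
distinct block proposals for the slot `(A, r)`. -/
theorem unique_support {V : Type} [DecidableEq V] (k : ℕ) (B : ℕ → Block V)
    (A : V) (r : ℕ)
    (h_incr : ∀ i < k, (B i).round < (B (i + 1)).round)
    (h_first : ∀ i < k, (B (i + 1)).parents.head? = some (B i)) :
    (∀ i j : ℕ, i ≤ j → j ≤ k → ∀ b : Block V,
        supportedBlock A r (B i) = some b → supportedBlock A r (B j) = some b)
    ∧ ¬ ∃ i j : ℕ, i ≤ k ∧ j ≤ k ∧ ∃ b b' : Block V, b ≠ b' ∧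
        supportedBlock A r (B i) = some b ∧
        supportedBlock A r (B j) = some b' := by
  have key : ∀ i j : ℕ, i ≤ j → j ≤ k → ∀ b : Block V,
      supportedBlock A r (B i) = some b → supportedBlock A r (B j) = some b := by
    intro i j hij
    induction j, hij using Nat.le_induction with
    | base => intro _ b h; exact h
    | succ n hn ih =>
      intro hk b h
      exact supportedBlock_step A r (B n) (B (n + 1)) b (h_incr n (by omega))
        (h_first n (by omega)) (ih (by omega) b h)
  refine ⟨key, ?_⟩
  rintro ⟨i, j, hi, hj, b, b', hne, h1, h2⟩
  rcases le_total i j with hij | hij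
  · have h3 := key i j hij hj b h1
    rw [h2] at h3
    exact hne (Option.some.inj h3).symm
  · have h3 := key j i hij hi b' h2
    rw [h1] at h3
    exact hne (Option.some.inj h3)
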